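/- Let c ∈ ℝ and let f_i(x) = a_i x + b_i (i ∈ [n]) be monotone nondecreasing linear functions, none of which is the identity (a_i ≥ 0 and (a_i, b_i) ≠ (1, 0)), and let f̄_i(x) = max{f_i(x), x}. Let σ be a permutation of [n] compatible with the lexicographic order with respect to (δ(f_i), γ(f_i)). Then f̄_{σ(n)}∘⋯∘f̄_{σ(1)}(c) equals the maximum over all permutations τ of [n] and all integers 0 ≤ k ≤ n of f_{τ(k)}∘⋯∘f_{τ(1)}(c); in particular, σ is optimal for the maximum total composition ordering problem ((f̄_i)_{i∈[n]}, c). -/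

import Mathlib

/-!
Write `f̄ = max(f, id)`. Everything rests on a pairwise exchange inequality: if `(δ, γ)` of `f` is
lexicographically at most that of `g`, then `f̄ ∘ ḡ ≤ ḡ ∘ f̄`. As `f` and `g` are nondecreasing,
it is enough to bound `f (g x)` by `ḡ (f̄ x)`. When the `δ`-values agree, `f ∘ g ≤ g ∘ f`, because
for `f x = a x + b` and `g x = a' x + b'` the difference `g (f x) - f (g x)` is the constant
`b' (1 - a) - b (1 - a')`, whose sign is found by comparing `b / (1 - a)` with `b' / (1 - a')`.
When the `δ`-values differ, `f` contracts distances while `g` does not shrink them.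

By the exchange inequality, an insertion-sort argument shows that the sorted order is optimal for
the total compositions of the `f̄ᵢ`. On the other hand, a total composition of the `f̄ᵢ` along a
list is the largest composition of the `fᵢ` along a sublist, attained by the indices at which `f̄ᵢ`
takes the value of `fᵢ`; and every list of indices without repetitions is an initial segment of a
permutation.
-/

/-- `compSeq f σ k c = f (σ k) ∘ ⋯ ∘ f (σ 1) (c)` (0-indexed: applies `f (σ 0)` first). -/
def compSeq {n : ℕ} (f : Fin n → ℝ → ℝ) (σ : Fin n → Fin n) (k : ℕ) (c : ℝ) : ℝ :=
  (((List.finRange n).take k).map σ).foldl (fun x i => f i x) c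

/-- `γ` of the linear function `x ↦ a x + b`: the fixed point `b / (1 - a)` if `a ≠ 1`,
`+∞` if `a = 1` and `b < 0`, `-∞` if `a = 1` and `b ≥ 0`. -/
noncomputable def gam (a b : ℝ) : EReal :=
  if a = 1 then (if b < 0 then (⊤ : EReal) else (⊥ : EReal))
  else ((b / (1 - a) : ℝ) : EReal)

/-- `δ` of the linear function `x ↦ a x + b`: `+1` if `a ≥ 1`, `-1` if `a < 1`. -/
noncomputable def del (a : ℝ) : ℤ := if 1 ≤ a then 1 else -1

section SupId

/-- The function `f̄ = max(f, id)`: applying it amounts to being free to apply `f` or to skip it. -/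
def supId {α : Type*} [SemilatticeSup α] (f : α → α) : α → α := f ⊔ id

section SemilatticeSup

variable {α : Type*} [SemilatticeSup α]

lemma le_supId (f : α → α) (x : α) : f x ≤ supId f x := le_sup_left

lemma self_le_supId (f : α → α) (x : α) : x ≤ supId f x := le_sup_right

lemma monotone_supId {f : α → α} (hf : Monotone f) : Monotone (supId f) := hf.sup monotone_id

end SemilatticeSup

lemma supId_eq_or_eq {α : Type*} [LinearOrder α] (f : α → α) (x : α) :
    supId f x = f x ∨ supId f x = x :=
  max_choice (f x) x

lemma supId_comp_supId_le {α : Type*} [LinearOrder α] {f g : α → α} (hf : Monotone f)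
    (hg : Monotone g) (h : ∀ x, f (g x) ≤ supId g (supId f x)) :
    supId f ∘ supId g ≤ supId g ∘ supId f := by
  intro x
  have hfx : f x ≤ supId g (supId f x) := (le_supId f x).trans (self_le_supId g _)
  have hgx : g x ≤ supId g (supId f x) := (hg (self_le_supId f x)).trans (le_supId g _)
  have hx : x ≤ supId g (supId f x) := (self_le_supId f x).trans (self_le_supId g _)
  have hfgx : f (supId g x) ≤ supId g (supId f x) :=
    (hf.map_sup (g x) x).trans_le (sup_le (h x) hfx)
  exact sup_le hfgx (sup_le hgx hx)

lemma supId_comp_supId_le_of_comp_le {α : Type*} [LinearOrder α] {f g : α → α} (hf : Monotone f)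
    (hg : Monotone g) (h : f ∘ g ≤ g ∘ f) : supId f ∘ supId g ≤ supId g ∘ supId f :=
  supId_comp_supId_le hf hg fun x =>
    calc f (g x) ≤ g (f x) := h x
      _ ≤ g (supId f x) := hg (le_supId f x)
      _ ≤ supId g (supId f x) := le_supId g _

lemma supId_comp_supId_le_of_antitone_sub_of_monotone_sub {α : Type*} [AddCommGroup α]
    [LinearOrder α] [IsOrderedAddMonoid α] {f g : α → α} (hf : Monotone f) (hg : Monotone g)
    (hf' : Antitone (f - id)) (hg' : Monotone (g - id)) :
    supId f ∘ supId g ≤ supId g ∘ supId f := by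
  refine supId_comp_supId_le hf hg fun x => ?_
  rcases le_or_gt (g x) x with hgx | hgx
  · exact (hf hgx).trans ((le_supId f x).trans (self_le_supId g _))
  rcases le_or_gt (f (g x)) (g x) with hfgx | hfgx
  · exact hfgx.trans ((hg (self_le_supId f x)).trans (le_supId g _))
  -- As `f` moves `g x` up, it moves `x` up at least as far; so `g` moves `f x` up at least as far
  -- as it moves `x`.
  have hf_gain : f (g x) - g x ≤ f x - x := hf' hgx.le
  have hfx : x ≤ f x := sub_nonneg.1 ((sub_pos.2 hfgx).le.trans hf_gain)
  have hg_gain : g x - x ≤ g (f x) - f x := hg' hfx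
  calc f (g x) = x + (f (g x) - g x) + (g x - x) := by abel
    _ ≤ x + (f x - x) + (g (f x) - f x) := by gcongr
    _ = g (f x) := by abel
    _ ≤ supId g (supId f x) := (hg (le_supId f x)).trans (le_supId g _)

end SupId

section Linear

lemma monotone_mul_add {R : Type*} [Semiring R] [PartialOrder R] [IsOrderedRing R] {a : R}
    (ha : 0 ≤ a) (b : R) : Monotone (a * · + b) :=
  (monotone_mul_left_of_nonneg ha).add_const b

lemma mul_add_comp_mul_add_le {R : Type*} [CommRing R] [PartialOrder R] [IsOrderedRing R]
    {a b a' b' : R} (h : b * (1 - a') ≤ b' * (1 - a)) :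
    (a * · + b) ∘ (a' * · + b') ≤ (a' * · + b') ∘ (a * · + b) := fun x =>
  calc a * (a' * x + b') + b = a * a' * x + a * b' + a' * b + b * (1 - a') := by ring
    _ ≤ a * a' * x + a * b' + a' * b + b' * (1 - a) := by gcongr
    _ = a' * (a * x + b) + b' := by ring

lemma antitone_mul_add_sub_id {R : Type*} [CommRing R] [PartialOrder R] [IsOrderedRing R] {a : R}
    (ha : a ≤ 1) (b : R) : Antitone ((a * · + b) - id) := fun x y hxy =>
  calc a * y + b - y = b - (1 - a) * y := by ring
    _ ≤ b - (1 - a) * x := by gcongr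
    _ = a * x + b - x := by ring

lemma monotone_mul_add_sub_id {R : Type*} [CommRing R] [PartialOrder R] [IsOrderedRing R] {a : R}
    (ha : 1 ≤ a) (b : R) : Monotone ((a * · + b) - id) := fun x y hxy =>
  calc a * x + b - x = (a - 1) * x + b := by ring
    _ ≤ (a - 1) * y + b := by gcongr
    _ = a * y + b - y := by ring

lemma div_le_div_iff_of_mul_pos {K : Type*} [Field K] [LinearOrder K] [IsStrictOrderedRing K]
    {a b c d : K} (h : 0 < b * d) : a / b ≤ c / d ↔ a * d ≤ c * b := by
  have hb : b ≠ 0 := left_ne_zero_of_mul h.ne'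
  have hd : d ≠ 0 := right_ne_zero_of_mul h.ne'
  rw [← mul_div_mul_right a b hd, ← mul_div_mul_right c d hb, mul_comm d b,
    div_le_div_iff_of_pos_right h]

end Linear

section Lex

variable {a b a' b' : ℝ}

lemma del_eq_del_iff : del a = del a' ↔ (1 ≤ a ↔ 1 ≤ a') := by
  by_cases h : 1 ≤ a <;> by_cases h' : 1 ≤ a' <;> simp [del, h, h']

lemma del_lt_del_iff : del a < del a' ↔ a < 1 ∧ 1 ≤ a' := by
  by_cases h : 1 ≤ a <;> by_cases h' : 1 ≤ a' <;> simp [del, h, h', ← not_le]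

lemma gam_of_ne_one (ha : a ≠ 1) (b : ℝ) : gam a b = (b / (1 - a) : ℝ) := if_neg ha

lemma gam_one_le_coe {r : ℝ} : gam 1 b ≤ r ↔ 0 ≤ b := by
  by_cases hb : b < 0 <;> simp [gam, hb, le_of_not_gt]

lemma coe_le_gam_one {r : ℝ} : (r : EReal) ≤ gam 1 b ↔ b < 0 := by
  by_cases hb : b < 0 <;> simp [gam, hb]

lemma one_sub_mul_one_sub_pos (hδ : del a = del a') (ha : a ≠ 1) (ha' : a' ≠ 1) :
    0 < (1 - a) * (1 - a') := by
  rw [del_eq_del_iff] at hδ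
  rcases ha.lt_or_gt with h | h
  · have h' : a' < 1 := not_le.1 (mt hδ.2 h.not_ge)
    exact mul_pos (sub_pos.2 h) (sub_pos.2 h')
  · have h' : 1 < a' := (hδ.1 h.le).lt_of_ne' ha'
    exact mul_pos_of_neg_of_neg (sub_neg.2 h) (sub_neg.2 h')

lemma mul_one_sub_le_of_gam_le (hδ : del a = del a') (hγ : gam a b ≤ gam a' b') :
    b * (1 - a') ≤ b' * (1 - a) := by
  rcases eq_or_ne a 1 with rfl | ha <;> rcases eq_or_ne a' 1 with rfl | ha'
  · simp
  · have h1 : 1 ≤ a' := (del_eq_del_iff.1 hδ).1 le_rfl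
    rw [gam_of_ne_one ha', gam_one_le_coe] at hγ
    simpa using mul_nonpos_of_nonneg_of_nonpos hγ (sub_nonpos.2 h1)
  · have h1 : 1 ≤ a := (del_eq_del_iff.1 hδ).2 le_rfl
    rw [gam_of_ne_one ha, coe_le_gam_one] at hγ
    simpa using mul_nonneg_of_nonpos_of_nonpos hγ.le (sub_nonpos.2 h1)
  · rw [gam_of_ne_one ha, gam_of_ne_one ha', EReal.coe_le_coe_iff] at hγ
    exact (div_le_div_iff_of_mul_pos (one_sub_mul_one_sub_pos hδ ha ha')).1 hγ

lemma supId_comp_supId_le_of_lex (ha : 0 ≤ a) (ha' : 0 ≤ a')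
    (h : del a < del a' ∨ (del a = del a' ∧ gam a b ≤ gam a' b')) :
    supId (a * · + b) ∘ supId (a' * · + b') ≤ supId (a' * · + b') ∘ supId (a * · + b) := by
  have hf := monotone_mul_add ha b
  have hg := monotone_mul_add ha' b'
  rcases h with hδ | ⟨hδ, hγ⟩
  · obtain ⟨ha1, ha'1⟩ := del_lt_del_iff.1 hδ
    exact supId_comp_supId_le_of_antitone_sub_of_monotone_sub hf hg
      (antitone_mul_add_sub_id ha1.le b) (monotone_mul_add_sub_id ha'1 b')
  · exact supId_comp_supId_le_of_comp_le hf hg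
      (mul_add_comp_mul_add_le (mul_one_sub_le_of_gam_le hδ hγ))

end Lex

section CompList

variable {ι α : Type*}

/-- The composition of the functions `f i` along a list of indices, the head being applied first;
`compSeq` is the case of an initial segment of a permutation. -/
def compList (f : ι → α → α) (l : List ι) (x : α) : α := l.foldl (fun x i => f i x) x

lemma compList_cons (f : ι → α → α) (i : ι) (l : List ι) (x : α) :
    compList f (i :: l) x = compList f l (f i x) := rfl

lemma monotone_compList [Preorder α] {f : ι → α → α} (hf : ∀ i, Monotone (f i)) (l : List ι) :
    Monotone (compList f l) := by
  induction l with
  | nil => exact monotone_id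
  | cons i l ih => exact ih.comp (hf i)

lemma compList_append_cons_le [Preorder α] {f : ι → α → α} (hf : ∀ i, Monotone (f i)) {i : ι}
    {p : List ι} (h : ∀ j ∈ p, f i ∘ f j ≤ f j ∘ f i) (q : List ι) (x : α) :
    compList f (p ++ i :: q) x ≤ compList f (i :: (p ++ q)) x := by
  induction p generalizing x with
  | nil => exact le_rfl
  | cons j p ih =>
    rw [List.forall_mem_cons] at h
    calc compList f (p ++ i :: q) (f j x) ≤ compList f (p ++ q) (f i (f j x)) := ih h.2 (f j x)
      _ ≤ compList f (p ++ q) (f j (f i x)) := monotone_compList hf (p ++ q) (h.1 x)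

lemma compList_le_compList_of_perm [Preorder α] {f : ι → α → α} (hf : ∀ i, Monotone (f i))
    {l l' : List ι} (hp : l'.Perm l) (hl : l.Pairwise fun i j => f i ∘ f j ≤ f j ∘ f i) (x : α) :
    compList f l' x ≤ compList f l x := by
  induction l generalizing l' x with
  | nil => rw [hp.eq_nil]
  | cons i l ih =>
    obtain ⟨p, q, rfl⟩ := List.append_of_mem (hp.mem_iff.2 List.mem_cons_self)
    have hpq : (p ++ q).Perm l := (List.perm_middle.symm.trans hp).cons_inv
    obtain ⟨hi, hl⟩ := List.pairwise_cons.1 hl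
    have hip : ∀ j ∈ p, f i ∘ f j ≤ f j ∘ f i := fun j hj =>
      hi j (hpq.subset (List.mem_append_left q hj))
    exact (compList_append_cons_le hf hip q x).trans (ih hpq hl (f i x))

lemma compList_le_compList_supId_of_sublist [SemilatticeSup α] {f : ι → α → α}
    (hf : ∀ i, Monotone (f i)) {s l : List ι} (hs : s.Sublist l) (x : α) :
    compList f s x ≤ compList (fun i => supId (f i)) l x := by
  have hmono (l : List ι) : Monotone (compList (fun i => supId (f i)) l) :=
    monotone_compList (fun i => monotone_supId (hf i)) l
  induction hs generalizing x with
  | slnil => exact le_rfl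
  | cons i _ ih => exact (ih x).trans (hmono _ (self_le_supId (f i) x))
  | cons_cons i _ ih => exact (ih (f i x)).trans (hmono _ (le_supId (f i) x))

lemma exists_sublist_compList_eq_compList_supId [LinearOrder α] (f : ι → α → α) (l : List ι)
    (x : α) :
    ∃ s : List ι, s.Sublist l ∧ compList f s x = compList (fun i => supId (f i)) l x := by
  induction l generalizing x with
  | nil => exact ⟨[], List.Sublist.refl _, rfl⟩
  | cons i l ih =>
    obtain ⟨s, hs, hsx⟩ := ih (supId (f i) x)
    rcases supId_eq_or_eq (f i) x with h | h
    · refine ⟨i :: s, hs.cons_cons i, ?_⟩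
      rw [compList_cons, compList_cons, ← hsx, h]
    · refine ⟨s, hs.cons i, ?_⟩
      rw [compList_cons, ← hsx, h]

end CompList

section CompSeq

variable {n : ℕ}

lemma exists_equiv_map_finRange_eq {ι : Type*} {l : List ι} (hnd : l.Nodup) (hmem : ∀ i, i ∈ l)
    (hlen : l.length = n) : ∃ e : Fin n ≃ ι, (List.finRange n).map e = l := by
  classical
  subst hlen
  exact ⟨hnd.getEquivOfForallMemList l hmem, l.map_get_finRange⟩

lemma exists_perm_map_take_finRange_eq {s : List (Fin n)} (hs : s.Nodup) :
    ∃ τ : Equiv.Perm (Fin n), ((List.finRange n).take s.length).map τ = s := by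
  obtain ⟨u, hus, hu⟩ := List.subperm_of_subset hs fun i _ => List.mem_finRange i
  obtain ⟨t, hut⟩ := hu.exists_perm_append
  have ht : (List.finRange n).Perm (s ++ t) := hut.trans (hus.append_right t)
  obtain ⟨τ, hτ⟩ := exists_equiv_map_finRange_eq (n := n)
    (ht.nodup_iff.1 (List.nodup_finRange n)) (fun i => ht.subset (List.mem_finRange i))
    (ht.length_eq.symm.trans List.length_finRange)
  exact ⟨τ, by rw [List.map_take, hτ, List.take_left]⟩

lemma compSeq_eq_compList (f : Fin n → ℝ → ℝ) (σ : Fin n → Fin n) (k : ℕ) (c : ℝ) :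
    compSeq f σ k c = compList f (((List.finRange n).take k).map σ) c := rfl

lemma compSeq_self_eq_compList (f : Fin n → ℝ → ℝ) (σ : Fin n → Fin n) (c : ℝ) :
    compSeq f σ n c = compList f ((List.finRange n).map σ) c := by
  rw [compSeq_eq_compList, List.take_of_length_le List.length_finRange.le]

lemma compSeq_le_compSeq_of_forall_lt {f : Fin n → ℝ → ℝ} (hf : ∀ i, Monotone (f i))
    {σ : Equiv.Perm (Fin n)}
    (hσ : ∀ i j, i < j → f (σ i) ∘ f (σ j) ≤ f (σ j) ∘ f (σ i)) (τ : Equiv.Perm (Fin n)) (c : ℝ) :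
    compSeq f τ n c ≤ compSeq f σ n c := by
  rw [compSeq_self_eq_compList, compSeq_self_eq_compList]
  have hp : ((List.finRange n).map τ).Perm ((List.finRange n).map σ) :=
    τ.map_finRange_perm.trans σ.map_finRange_perm.symm
  have hsorted := (List.pairwise_lt_finRange n).imp (hσ _ _)
  exact compList_le_compList_of_perm hf hp (List.pairwise_map.2 hsorted) c

lemma compSeq_le_compSeq_supId {f : Fin n → ℝ → ℝ} (hf : ∀ i, Monotone (f i))
    (σ : Fin n → Fin n) (k : ℕ) (c : ℝ) :
    compSeq f σ k c ≤ compSeq (fun i => supId (f i)) σ n c := by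
  rw [compSeq_self_eq_compList]
  exact compList_le_compList_supId_of_sublist hf ((List.take_sublist k _).map σ) c

lemma exists_compSeq_eq_compSeq_supId (f : Fin n → ℝ → ℝ) (σ : Equiv.Perm (Fin n)) (c : ℝ) :
    ∃ (τ : Equiv.Perm (Fin n)) (k : ℕ), k ≤ n ∧
      compSeq f τ k c = compSeq (fun i => supId (f i)) σ n c := by
  obtain ⟨s, hs, hsc⟩ :=
    exists_sublist_compList_eq_compList_supId f ((List.finRange n).map σ) c
  have hnd : s.Nodup := ((List.nodup_finRange n).map σ.injective).sublist hs
  obtain ⟨τ, hτ⟩ := exists_perm_map_take_finRange_eq hnd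
  refine ⟨τ, s.length, by simpa using hs.length_le, ?_⟩
  rw [compSeq_eq_compList, hτ, hsc, compSeq_self_eq_compList]

end CompSeq

/-- If `σ` is compatible with the lexicographic order on `(δ(fᵢ), γ(fᵢ))`, then the total
composition of the `f̄ᵢ` under `σ` attains the maximum of the partial composition ordering
problem for the `fᵢ`; in particular `σ` is optimal for the total problem for the `f̄ᵢ`. -/
theorem stmt8 (n : ℕ) (c : ℝ) (a b : Fin n → ℝ) (ha : ∀ i, 0 ≤ a i)
    (hnid : ∀ i, (a i, b i) ≠ (1, 0)) (σ : Equiv.Perm (Fin n))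
    (hcompat : ∀ i j : Fin n, i < j →
      del (a (σ i)) < del (a (σ j)) ∨
        (del (a (σ i)) = del (a (σ j)) ∧
          gam (a (σ i)) (b (σ i)) ≤ gam (a (σ j)) (b (σ j)))) :
    (∀ (τ : Equiv.Perm (Fin n)) (k : ℕ), k ≤ n →
      compSeq (fun i x => a i * x + b i) τ k c ≤
        compSeq (fun i x => max (a i * x + b i) x) σ n c) ∧
    (∃ (τ : Equiv.Perm (Fin n)) (k : ℕ), k ≤ n ∧
      compSeq (fun i x => a i * x + b i) τ k c =
        compSeq (fun i x => max (a i * x + b i) x) σ n c) ∧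
    (∀ τ : Equiv.Perm (Fin n),
      compSeq (fun i x => max (a i * x + b i) x) τ n c ≤
        compSeq (fun i x => max (a i * x + b i) x) σ n c) := by
  have hf (i : Fin n) : Monotone (a i * · + b i) := monotone_mul_add (ha i) (b i)
  have htotal (τ : Equiv.Perm (Fin n)) :
      compSeq (fun i => supId (a i * · + b i)) τ n c ≤
        compSeq (fun i => supId (a i * · + b i)) σ n c :=
    compSeq_le_compSeq_of_forall_lt (fun i => monotone_supId (hf i))
      (fun i j hij => supId_comp_supId_le_of_lex (ha _) (ha _) (hcompat i j hij)) τ c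
  exact ⟨fun τ k _ => (compSeq_le_compSeq_supId hf τ k c).trans (htotal τ),
    exists_compSeq_eq_compSeq_supId _ σ c, htotal⟩
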